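/- arXiv:2207.07974 — 13 statements merged into one kernel-verified Lean document; each statement's English description precedes it below -/
import Mathlib

section
/- For every learning rate η > 0, the multiplicative weights update distributions satisfy ∑_{t=1}^{T} ∑_{i=1}^{n} p_t(i)·ℓ_t(i) ≤ min_{i*∈{1,…,n}} ∑_{t=1}^{T} ℓ_t(i*) + (log n)/η + η·T. -/
/-!
The proof uses the potential `log W_k`, where `W_k = ∑ i, exp (-η * L_k i)` and `L_k i` is the
cumulative loss of expert `i` over the first `k` rounds. Since `exp (-x) ≤ 1 - x + x ^ 2` for
`x ≥ 0` and `log y ≤ y - 1`, each round changes the potential by at most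
`-η * ⟨p_t, ℓ_t⟩ + η ^ 2` (`log_sum_exp_step`). The sum over rounds telescopes; it starts at
`log W_0 = log n`, and ends at `log W_T ≥ -η * L_T i` for every expert `i`. Dividing by `η` gives
the bound.
-/

lemma exp_neg_le_quadratic {x : ℝ} (hx : 0 ≤ x) : Real.exp (-x) ≤ 1 - x + x ^ 2 := by
  -- `exp (-x) ≤ 1 / (1 + x)` and `(1 + x) * (1 - x + x ^ 2) = 1 + x ^ 3`
  have h1 : x + 1 ≤ Real.exp x := Real.add_one_le_exp x
  rw [Real.exp_neg]
  refine inv_le_of_inv_le₀ (by nlinarith [sq_nonneg (x - 1)]) ?_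
  refine le_trans ?_ h1
  rw [inv_le_iff_one_le_mul₀ (by nlinarith [sq_nonneg (x - 1)])]
  nlinarith [pow_nonneg hx 3]

/-- One round of the potential argument: `a` holds the log-weights before the round and `l` the
losses of the round. -/
lemma log_sum_exp_step {n : ℕ} (hn : 0 < n) {η : ℝ} (hη : 0 < η) (a l : Fin n → ℝ)
    (hl : ∀ i, l i ∈ Set.Icc (0 : ℝ) 1) :
    Real.log (∑ i, Real.exp (a i - η * l i)) - Real.log (∑ i, Real.exp (a i)) ≤
      -η * (∑ i, Real.exp (a i) / (∑ j, Real.exp (a j)) * l i) + η ^ 2 := by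
  have : Nonempty (Fin n) := ⟨⟨0, hn⟩⟩
  have pos : ∀ b : Fin n → ℝ, 0 < ∑ i, Real.exp (b i) := fun b =>
    Finset.sum_pos (fun i _ => Real.exp_pos _) Finset.univ_nonempty
  set W := ∑ i, Real.exp (a i) with hW
  have hWpos : 0 < W := pos a
  have hV := pos (fun i => a i - η * l i)
  have hterm : ∑ i, Real.exp (a i - η * l i) ≤
      ∑ i, (Real.exp (a i) - η * (Real.exp (a i) * l i) + η ^ 2 * Real.exp (a i)) := by
    refine Finset.sum_le_sum fun i _ => ?_
    obtain ⟨h0, h1⟩ := hl i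
    have hq := exp_neg_le_quadratic (mul_nonneg hη.le h0)
    have hsq : (η * l i) ^ 2 ≤ η ^ 2 := by
      rw [mul_pow]
      exact mul_le_of_le_one_right (sq_nonneg η) (pow_le_one₀ h0 h1)
    rw [sub_eq_add_neg, Real.exp_add]
    have := mul_le_mul_of_nonneg_left
      (show Real.exp (-(η * l i)) ≤ 1 - η * l i + η ^ 2 by linarith) (Real.exp_pos (a i)).le
    linarith
  rw [Finset.sum_add_distrib, Finset.sum_sub_distrib, ← Finset.mul_sum, ← Finset.mul_sum,
    ← hW] at hterm
  have hp : ∑ i, Real.exp (a i) / W * l i = (∑ i, Real.exp (a i) * l i) / W := by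
    rw [Finset.sum_div]
    exact Finset.sum_congr rfl fun i _ => by ring
  rw [hp, ← Real.log_div hV.ne' hWpos.ne']
  refine (Real.log_le_sub_one_of_pos (div_pos hV hWpos)).trans ?_
  rw [sub_le_iff_le_add, div_le_iff₀ hWpos]
  refine hterm.trans (le_of_eq ?_)
  field_simp
  ring

/-- **MWU regret bound (Lemma 2.3, first part).**
For every learning rate `η > 0`, the multiplicative weights update (Hedge)
distributions `p t i = exp(-η ∑_{τ<t} ℓ τ i) / ∑_j exp(-η ∑_{τ<t} ℓ τ j)`
satisfy
`∑_{t<T} ∑_{i<n} p t i * ℓ t i ≤ min_{i*} ∑_{t<T} ℓ t i* + (log n)/η + η T`. -/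
theorem mwu_regret_bound (n T : ℕ) (hn : 0 < n) (hT : 0 < T)
    (η : ℝ) (hη : 0 < η)
    (ℓ : Fin T → Fin n → ℝ) (hℓ : ∀ t i, ℓ t i ∈ Set.Icc (0 : ℝ) 1)
    (p : Fin T → Fin n → ℝ)
    (hp : ∀ t i, p t i =
      Real.exp (-η * ∑ τ ∈ Finset.univ.filter (fun τ : Fin T => τ < t), ℓ τ i) /
      ∑ j, Real.exp (-η * ∑ τ ∈ Finset.univ.filter (fun τ : Fin T => τ < t), ℓ τ j)) :
    ∑ t, ∑ i, p t i * ℓ t i ≤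
      Finset.univ.inf' ⟨⟨0, hn⟩, Finset.mem_univ _⟩ (fun istar => ∑ t, ℓ t istar)
        + Real.log n / η + η * T := by
  -- Cumulative losses indexed by `ℕ`, so that the state after the last round is available too.
  let L : ℕ → Fin n → ℝ := fun k i =>
    ∑ τ ∈ Finset.univ.filter (fun τ : Fin T => (τ : ℕ) < k), ℓ τ i
  let Φ : ℕ → ℝ := fun k => Real.log (∑ i, Real.exp (-η * L k i))
  have hL : ∀ (t : Fin T) i, L (t + 1) i = L t i + ℓ t i := by
    intro t i
    have hins : Finset.univ.filter (fun τ : Fin T => (τ : ℕ) < (t : ℕ) + 1) =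
        insert t (Finset.univ.filter (fun τ : Fin T => (τ : ℕ) < (t : ℕ))) := by
      ext τ
      simp only [Finset.mem_filter, Finset.mem_univ, true_and, Finset.mem_insert, Fin.ext_iff]
      omega
    simp only [L]
    rw [hins, Finset.sum_insert (by simp), add_comm]
  have hstep : ∀ t : Fin T,
      Φ (t + 1) - Φ t ≤ -η * (∑ i, p t i * ℓ t i) + η ^ 2 := by
    intro t
    have h := log_sum_exp_step hn hη (fun i => -η * L t i) (ℓ t) (hℓ t)
    have e : ∀ i, -η * L (t + 1) i = -η * L t i - η * ℓ t i := fun i => by rw [hL]; ring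
    simp only [Φ, e, hp]
    exact h
  have htel : ∑ t : Fin T, (Φ (t + 1) - Φ t) = Φ T - Φ 0 := by
    rw [Fin.sum_univ_eq_sum_range (fun k => Φ (k + 1) - Φ k), Finset.sum_range_sub]
  have hsum := Finset.sum_le_sum fun t (_ : t ∈ Finset.univ) => hstep t
  rw [htel, Finset.sum_add_distrib, ← Finset.mul_sum] at hsum
  have h0 : Φ 0 = Real.log n := by simp [Φ, L]
  have hend : ∀ i, -η * ∑ t, ℓ t i ≤ Φ T := by
    intro i
    have hLT : L T i = ∑ t, ℓ t i := by simp [L]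
    rw [← hLT, ← Real.log_exp (-η * L T i)]
    exact Real.log_le_log (Real.exp_pos _)
      (Finset.single_le_sum (f := fun i => Real.exp (-η * L T i))
        (fun j _ => (Real.exp_pos _).le) (Finset.mem_univ i))
  obtain ⟨i, -, hi⟩ := Finset.exists_mem_eq_inf' (s := Finset.univ)
    ⟨⟨0, hn⟩, Finset.mem_univ _⟩ (fun istar => ∑ t, ℓ t istar)
  rw [hi]
  have hfin := hend i
  simp only [Finset.sum_const, Finset.card_univ, Fintype.card_fin, nsmul_eq_mul] at hsum
  refine le_of_mul_le_mul_left ?_ hη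
  have hlog : η * (Real.log n / η) = Real.log n := mul_div_cancel₀ _ hη.ne'
  rw [mul_add, mul_add, hlog]
  linarith
end

section
/- If n ≥ 2 and the learning rate is chosen as η = √((log n)/T), then the multiplicative weights update distributions satisfy ∑_{t=1}^{T} ∑_{i=1}^{n} p_t(i)·ℓ_t(i) − min_{i*∈{1,…,n}} ∑_{t=1}^{T} ℓ_t(i*) ≤ 2·√(T·log n). -/
/-- One round of the potential argument: reweighting by `exp (-η * l i)` multiplies the total
weight by at most `exp (-η * m + η ^ 2)`, where `m` is the mean of `l` under the normalized
weights. -/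
lemma weight_step {ι : Type*} [Fintype ι] [Nonempty ι] {η : ℝ} (hη : 0 ≤ η) (w l : ι → ℝ)
    (hw : ∀ i, 0 < w i) (hl : ∀ i, l i ∈ Set.Icc (0 : ℝ) 1) :
    ∑ i, w i * Real.exp (-η * l i) ≤
      (∑ i, w i) * Real.exp (-η * (∑ i, w i / (∑ j, w j) * l i) + η ^ 2) := by
  have hW : 0 < ∑ i, w i := Finset.sum_pos (fun i _ => hw i) Finset.univ_nonempty
  have hm : (∑ i, w i) * (∑ i, w i / (∑ j, w j) * l i) = ∑ i, w i * l i := by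
    rw [Finset.mul_sum]
    refine Finset.sum_congr rfl fun i _ => ?_
    field_simp
  calc ∑ i, w i * Real.exp (-η * l i)
      ≤ ∑ i, (w i - η * (w i * l i) + η ^ 2 * w i) := by
        refine Finset.sum_le_sum fun i _ => ?_
        obtain ⟨h0, h1⟩ := hl i
        have h := exp_neg_le_quadratic (mul_nonneg hη h0)
        have hsq : (η * l i) ^ 2 ≤ η ^ 2 :=
          pow_le_pow_left₀ (mul_nonneg hη h0) (mul_le_of_le_one_right hη h1) 2
        rw [neg_mul]
        have := mul_le_mul_of_nonneg_left (h.trans (add_le_add_right hsq _)) (hw i).le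
        linarith
    _ = (∑ i, w i) * (-η * (∑ i, w i / (∑ j, w j) * l i) + η ^ 2 + 1) := by
        rw [Finset.sum_add_distrib, Finset.sum_sub_distrib, ← Finset.mul_sum, ← Finset.mul_sum,
          ← hm]
        ring
    _ ≤ _ := mul_le_mul_of_nonneg_left (Real.add_one_le_exp _) hW.le

lemma filter_val_lt_succ {T k : ℕ} (hk : k < T) :
    Finset.univ.filter (fun τ : Fin T => τ.val < k + 1) =
      insert ⟨k, hk⟩ (Finset.univ.filter (fun τ : Fin T => τ.val < k)) := by
  ext τ
  simp only [Finset.mem_filter, Finset.mem_univ, true_and, Finset.mem_insert, Fin.ext_iff]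
  omega

/-- The total weight after `k` rounds, bounded by iterating `weight_step`. Rounds are indexed by
natural numbers so that `k = T`, the state after the last round, is allowed. -/
lemma weight_bound {n T : ℕ} (hn : 0 < n) {η : ℝ} (hη : 0 ≤ η)
    (ℓ : Fin T → Fin n → ℝ) (hℓ : ∀ t i, ℓ t i ∈ Set.Icc (0 : ℝ) 1)
    (p : Fin T → Fin n → ℝ)
    (hp : ∀ t i, p t i =
      Real.exp (-η * ∑ τ ∈ Finset.univ.filter (fun τ : Fin T => τ < t), ℓ τ i) /
      ∑ j, Real.exp (-η * ∑ τ ∈ Finset.univ.filter (fun τ : Fin T => τ < t), ℓ τ j))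
    (k : ℕ) (hk : k ≤ T) :
    ∑ j, Real.exp (-η * ∑ τ ∈ Finset.univ.filter (fun τ : Fin T => τ.val < k), ℓ τ j) ≤
      n * Real.exp (∑ τ ∈ Finset.univ.filter (fun τ : Fin T => τ.val < k),
        (-η * (∑ i, p τ i * ℓ τ i) + η ^ 2)) := by
  haveI : Nonempty (Fin n) := ⟨⟨0, hn⟩⟩
  induction k with
  | zero => simp
  | succ k ih =>
    have hkT : k < T := hk
    have hnot : (⟨k, hkT⟩ : Fin T) ∉ Finset.univ.filter (fun τ : Fin T => τ.val < k) := by simp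
    have hstep := weight_step hη
      (fun j => Real.exp (-η * ∑ τ ∈ Finset.univ.filter (fun τ : Fin T => τ.val < k), ℓ τ j))
      (ℓ ⟨k, hkT⟩) (fun _ => Real.exp_pos _) (hℓ _)
    have hpk : ∀ i, Real.exp (-η * ∑ τ ∈ Finset.univ.filter (fun τ : Fin T => τ.val < k), ℓ τ i) /
        ∑ j, Real.exp (-η * ∑ τ ∈ Finset.univ.filter (fun τ : Fin T => τ.val < k), ℓ τ j)
        = p ⟨k, hkT⟩ i := by
      intro i
      rw [hp]
      simp only [Fin.lt_def]
    simp only [hpk] at hstep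
    rw [filter_val_lt_succ hkT, Finset.sum_insert hnot, add_comm, Real.exp_add, ← mul_assoc]
    refine le_trans (le_of_eq ?_)
      (hstep.trans (mul_le_mul_of_nonneg_right (ih hkT.le) (Real.exp_pos _).le))
    refine Finset.sum_congr rfl fun i _ => ?_
    rw [Finset.sum_insert hnot, ← Real.exp_add]
    congr 1
    ring

/-- **MWU with tuned learning rate (Lemma 2.3, tuned rate).**
If `n ≥ 2` and the learning rate is `η = √((log n)/T)`, the multiplicative
weights update distributions satisfy
`∑_{t<T} ∑_{i<n} p t i * ℓ t i − min_{i*} ∑_{t<T} ℓ t i* ≤ 2√(T log n)`. -/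
theorem mwu_regret_tuned (n T : ℕ) (hn : 2 ≤ n) (hT : 0 < T)
    (η : ℝ) (hη : η = Real.sqrt (Real.log n / T))
    (ℓ : Fin T → Fin n → ℝ) (hℓ : ∀ t i, ℓ t i ∈ Set.Icc (0 : ℝ) 1)
    (p : Fin T → Fin n → ℝ)
    (hp : ∀ t i, p t i =
      Real.exp (-η * ∑ τ ∈ Finset.univ.filter (fun τ : Fin T => τ < t), ℓ τ i) /
      ∑ j, Real.exp (-η * ∑ τ ∈ Finset.univ.filter (fun τ : Fin T => τ < t), ℓ τ j)) :
    ∑ t, ∑ i, p t i * ℓ t i -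
      Finset.univ.inf' ⟨⟨0, by omega⟩, Finset.mem_univ _⟩ (fun istar => ∑ t, ℓ t istar)
        ≤ 2 * Real.sqrt (T * Real.log n) := by
  have hn0 : (0 : ℝ) < n := by exact_mod_cast (by omega : 0 < n)
  have hT0 : (0 : ℝ) < T := by exact_mod_cast hT
  have hlog : 0 < Real.log n := Real.log_pos (by exact_mod_cast hn)
  have hηpos : 0 < η := by rw [hη]; positivity
  have hηsq : T * η ^ 2 = Real.log n := by
    rw [hη, Real.sq_sqrt (by positivity)]
    field_simp
  have hηmul : η * Real.sqrt (T * Real.log n) = Real.log n := by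
    rw [hη, ← Real.sqrt_mul (by positivity),
      show Real.log n / T * (T * Real.log n) = Real.log n ^ 2 by field_simp,
      Real.sqrt_sq hlog.le]
  obtain ⟨i, -, hi⟩ := Finset.exists_mem_eq_inf'
    (⟨⟨0, by omega⟩, Finset.mem_univ _⟩ : (Finset.univ : Finset (Fin n)).Nonempty)
    (fun istar => ∑ t, ℓ t istar)
  rw [hi]
  have hb := weight_bound (by omega) hηpos.le ℓ hℓ p hp T le_rfl
  simp only [Fin.is_lt, Finset.filter_true] at hb
  have hle := (Finset.single_le_sum (f := fun j => Real.exp (-η * ∑ τ, ℓ τ j))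
    (fun j _ => (Real.exp_pos _).le) (Finset.mem_univ i)).trans hb
  have hl := Real.log_le_log (Real.exp_pos _) hle
  rw [Real.log_exp, Real.log_mul hn0.ne' (Real.exp_pos _).ne', Real.log_exp,
    Finset.sum_add_distrib, ← Finset.mul_sum, Finset.sum_const, Finset.card_univ,
    Fintype.card_fin, nsmul_eq_mul, hηsq] at hl
  refine le_of_mul_le_mul_left ?_ hηpos
  linarith
end

section
/- (Loss vs. length dichotomy, Lemma 3.1.) Let ε > 0 and α ∈ (0,1). Let m, M be real numbers with 0 < m ≤ M, and let L_ii, L_ij, L_1 be real numbers with L_1 ≥ 0, L_ij ≤ 1, and L_ij > L_ii + ε. Define L_jj := (L_1·(M − m) + L_ij·m)/M. Then at least one of the following holds: (i) L_jj ≥ L_ii + ε − α, or (ii) M ≥ (1 + α/(1 − α))·m. -/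
/-- **Loss vs. length dichotomy (Lemma 3.1, arithmetic core).**
Expert `i` has average loss `Lii` over its interval of length `m`; the older
expert `j` has average loss `Lij` over that same interval, average loss
`L1 ≥ 0` over the earlier portion of length `M − m`, and overall average loss
`Ljj = (L1(M−m) + Lij·m)/M`. If `Lij > Lii + ε` (expert `i` survived the
eviction rule against `j`), then either `Ljj ≥ Lii + ε − α` or
`M ≥ (1 + α/(1−α))·m`. -/
theorem loss_vs_length (ε α : ℝ) (hε : 0 < ε) (hα : α ∈ Set.Ioo (0 : ℝ) 1)
    (m M Lii Lij L1 : ℝ) (hm : 0 < m) (hmM : m ≤ M)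
    (hL1 : 0 ≤ L1) (hLij : Lij ≤ 1) (hsurv : Lij > Lii + ε)
    (Ljj : ℝ) (hLjj : Ljj = (L1 * (M - m) + Lij * m) / M) :
    Ljj ≥ Lii + ε - α ∨ M ≥ (1 + α / (1 - α)) * m := by
  obtain ⟨_, hα1⟩ := hα
  have hM : 0 < M := hm.trans_le hmM
  have h1α : 0 < 1 - α := sub_pos.mpr hα1
  have hfac : (1 + α / (1 - α)) * m = m / (1 - α) := by
    field_simp
    ring
  rw [hfac]
  rcases le_or_gt (m / (1 - α)) M with h | h
  · exact Or.inr h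
  · left
    have hlen : M * (1 - α) < m := (lt_div_iff₀ h1α).mp h
    -- `Ljj * M ≥ Lij * m = Lij * M - Lij * (M - m) ≥ Lij * M - (M - m) ≥ (Lij - α) * M`
    rw [hLjj, ge_iff_le, le_div_iff₀ hM]
    have hearly : 0 ≤ L1 * (M - m) := mul_nonneg hL1 (sub_nonneg.mpr hmM)
    have hlate : Lij * (M - m) ≤ M - m :=
      mul_le_of_le_one_left (sub_nonneg.mpr hmM) hLij
    have hgap : (Lii + ε) * M ≤ Lij * M := mul_le_mul_of_nonneg_right hsurv.le hM.le
    linarith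
end

section
/- (Potential increase step.) Let ε > 0, let m, M be real numbers with 0 < m ≤ M, and let L_ii, L_ij, L_1 be real numbers with L_ii ≥ 0, L_1 ≥ 0, L_ij ≤ 1, and L_ij > L_ii + ε. Define L_jj := (L_1·(M − m) + L_ij·m)/M. Then 2·log M + L_jj ≥ 2·log m + L_ii + ε. -/
/-- **Potential increase step (key step of Lemma 3.2).**
With the potential `Φ = 2 log x + L` for an expert with interval length `x`
and average loss `L`: if `0 < m ≤ M`, `Lii ≥ 0`, `L1 ≥ 0`, `Lij ≤ 1`,
`Lij > Lii + ε`, and `Ljj = (L1(M−m) + Lij·m)/M`, then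
`2 log M + Ljj ≥ 2 log m + Lii + ε`. -/
theorem potential_increase (ε : ℝ) (hε : 0 < ε)
    (m M Lii Lij L1 : ℝ) (hm : 0 < m) (hmM : m ≤ M)
    (hLii : 0 ≤ Lii) (hL1 : 0 ≤ L1) (hLij : Lij ≤ 1) (hsurv : Lij > Lii + ε)
    (Ljj : ℝ) (hLjj : Ljj = (L1 * (M - m) + Lij * m) / M) :
    2 * Real.log M + Ljj ≥ 2 * Real.log m + Lii + ε := by
  have hM : 0 < M := hm.trans_le hmM
  -- With `r = m / M ≤ 1`, the log gain `log M - log m ≥ 1 - r` pays for the loss drop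
  -- `Lij - Ljj ≤ Lij * (1 - r) ≤ 1 - r`.
  have hr : m / M ≤ 1 := (div_le_one hM).2 hmM
  have hlog : Real.log m - Real.log M ≤ m / M - 1 := by
    rw [← Real.log_div hm.ne' hM.ne']
    exact Real.log_le_sub_one_of_pos (div_pos hm hM)
  have hL : Lij * (m / M) ≤ Ljj := by
    rw [hLjj, ← mul_div_assoc]
    gcongr
    linarith [mul_nonneg hL1 (sub_nonneg.2 hmM)]
  nlinarith [mul_nonneg (sub_nonneg.2 hLij) (sub_nonneg.2 hr)]
end

section
/- (Pool size bound, Lemma 3.2, abstract form.) Let ε ∈ (0, 1/2], let T ≥ 3 and t ≤ T be positive integers, and let S ≥ 1 be an integer. Suppose a_1 > a_2 > ⋯ > a_S are integers with 1 ≤ a_τ ≤ t for all τ, and ℓ_1,…,ℓ_S : {1,…,t} → [0,1] are loss sequences. For an expert τ and an interval I ⊆ {1,…,t}, write L_I(τ) := (1/|I|)·∑_{ν∈I} ℓ_τ(ν). Assume that for every τ ∈ {1,…,S−1}: L_{[a_τ, t]}(τ+1) > L_{[a_τ, t]}(τ) + ε (expert τ survives the eviction rule against the older expert τ+1). Then S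 ≤ (4/ε)·log T. -/
/-!
Write `n τ = t - a τ + 1` for the length of expert `τ`'s interval and `A τ` for its average loss
there. Nonnegativity of the losses on the older part of the longer interval and the survival rule
give `A (τ+1) ≥ (n τ / n (τ+1)) * (A τ + ε)`. Since `A τ + ε ≤ 1` and `1 - x⁻¹ ≤ log x`, the
potential `A τ + log (n τ)` grows by at least `ε` at each step (`potential_step`). It is at most
`1 + log T`, so `(S - 1) * ε ≤ 1 + log T`, and `1 ≤ log T` together with `ε ≤ 1/2` concludes.
-/

/-- One step of the potential: `X / n` is the average of the newer expert on its interval of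
length `n`, `Y / n` that of the older expert on the same interval, and `Z / m` that of the older
expert on its own, longer interval. -/
lemma potential_step {ε n m X Y Z : ℝ} (hn : 0 < n) (hnm : n ≤ m) (hY : Y ≤ n) (hYZ : Y ≤ Z)
    (h : X / n + ε < Y / n) :
    X / n + Real.log n + ε ≤ Z / m + Real.log m := by
  have hm : 0 < m := hn.trans_le hnm
  have hlog := Real.one_sub_inv_le_log_of_pos (div_pos hm hn)
  rw [Real.log_div hm.ne' hn.ne', inv_div] at hlog
  have h1 : Y / m ≤ Z / m := by gcongr
  -- The average over the longer interval loses at most `1 - n / m` because `Y / n ≤ 1`.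
  have h2 : Y / n - Y / m ≤ 1 - n / m := by
    have h3 : (1 - Y / n) * (n / m) = n / m - Y / m := by field_simp
    have h4 : n / m ≤ 1 := (div_le_one hm).2 hnm
    have h5 : Y / n ≤ 1 := (div_le_one hn).2 hY
    nlinarith
  linarith

/-- **Pool size bound (Lemma 3.2, abstract form).**
Experts are indexed `τ = 0,…,S−1` in order of joining time, expert `τ` having
entered at epoch `a τ`, with `a` strictly decreasing (a larger index means an
earlier entry). Expert `τ`'s interval is `[a τ, t]` and `L_I(τ)` is the average
of `ℓ τ` over `I`. If every expert survives the `ε`-threshold eviction rule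
against the next older expert, i.e. `L_{[a τ, t]}(τ+1) > L_{[a τ, t]}(τ) + ε`,
then `S ≤ (4/ε)·log T`. -/
theorem pool_size_bound (ε : ℝ) (hε : ε ∈ Set.Ioc (0 : ℝ) (1/2))
    (T t S : ℕ) (hT : 3 ≤ T) (ht : 0 < t) (htT : t ≤ T) (hS : 1 ≤ S)
    (a : Fin S → ℕ) (ha : ∀ τ, 1 ≤ a τ ∧ a τ ≤ t)
    (hdec : ∀ τ σ : Fin S, (τ : ℕ) < (σ : ℕ) → a σ < a τ)
    (ℓ : Fin S → ℕ → ℝ) (hℓ : ∀ τ ν, ν ∈ Finset.Icc 1 t → ℓ τ ν ∈ Set.Icc (0 : ℝ) 1)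
    (hsurv : ∀ τ : Fin S, ∀ h : (τ : ℕ) + 1 < S,
      (∑ ν ∈ Finset.Icc (a τ) t, ℓ ⟨(τ : ℕ) + 1, h⟩ ν) / ((Finset.Icc (a τ) t).card : ℝ) >
      (∑ ν ∈ Finset.Icc (a τ) t, ℓ τ ν) / ((Finset.Icc (a τ) t).card : ℝ) + ε) :
    (S : ℝ) ≤ (4 / ε) * Real.log T := by
  obtain ⟨hε0, hε1⟩ := hε
  have hpos : ∀ τ, (0 : ℝ) < ((Finset.Icc (a τ) t).card : ℝ) := fun τ => by
    have := ha τ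
    rw [Nat.card_Icc]
    exact_mod_cast (by omega : 0 < t + 1 - a τ)
  have hmem : ∀ τ ν, ν ∈ Finset.Icc (a τ) t → ν ∈ Finset.Icc 1 t := fun τ ν hν => by
    have := ha τ
    rw [Finset.mem_Icc] at hν ⊢
    omega
  have hsum_le : ∀ τ σ, ∑ ν ∈ Finset.Icc (a τ) t, ℓ σ ν ≤ ((Finset.Icc (a τ) t).card : ℝ) :=
    fun τ σ => by
      simpa using Finset.sum_le_card_nsmul _ (ℓ σ) 1 fun ν hν => (hℓ σ ν (hmem τ ν hν)).2
  have key : ∀ k (hk : k < S), (k : ℝ) * ε ≤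
      (∑ ν ∈ Finset.Icc (a ⟨k, hk⟩) t, ℓ ⟨k, hk⟩ ν) / ((Finset.Icc (a ⟨k, hk⟩) t).card : ℝ)
        + Real.log ((Finset.Icc (a ⟨k, hk⟩) t).card : ℝ) := by
    intro k
    induction k with
    | zero =>
      intro hk
      have h1 : 0 ≤ ∑ ν ∈ Finset.Icc (a ⟨0, hk⟩) t, ℓ ⟨0, hk⟩ ν :=
        Finset.sum_nonneg fun ν hν => (hℓ _ ν (hmem _ ν hν)).1
      have h2 := div_nonneg h1 (hpos ⟨0, hk⟩).le
      have h3 := Real.log_natCast_nonneg (Finset.Icc (a ⟨0, hk⟩) t).card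
      push_cast
      linarith
    | succ k ih =>
      intro hk
      have hk' : k < S := by omega
      have hsub : Finset.Icc (a ⟨k, hk'⟩) t ⊆ Finset.Icc (a ⟨k + 1, hk⟩) t :=
        Finset.Icc_subset_Icc_left (hdec ⟨k, hk'⟩ ⟨k + 1, hk⟩ (Nat.lt_succ_self k)).le
      have hstep := potential_step (hpos ⟨k, hk'⟩)
        (Nat.cast_le.2 (Finset.card_le_card hsub)) (hsum_le ⟨k, hk'⟩ ⟨k + 1, hk⟩)
        (Finset.sum_le_sum_of_subset_of_nonneg hsub
          fun ν hν _ => (hℓ ⟨k + 1, hk⟩ ν (hmem _ ν hν)).1)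
        (hsurv ⟨k, hk'⟩ hk)
      have := ih hk'
      push_cast
      linarith
  have hlast := key (S - 1) (by omega)
  rw [Nat.cast_sub hS, Nat.cast_one] at hlast
  set σ : Fin S := ⟨S - 1, by omega⟩
  have h1 := (div_le_one (hpos σ)).2 (hsum_le σ σ)
  have h2 : Real.log ((Finset.Icc (a σ) t).card : ℝ) ≤ Real.log T := by
    refine Real.log_le_log (hpos σ) (Nat.cast_le.2 ?_)
    have := ha σ
    rw [Nat.card_Icc]
    omega
  have h3 : 1 ≤ Real.log T := by
    rw [Real.le_log_iff_exp_le (by positivity)]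
    have : (3 : ℝ) ≤ T := by exact_mod_cast hT
    linarith [Real.exp_one_lt_d9]
  rw [div_mul_eq_mul_div, le_div_iff₀ hε0]
  linarith
end

section
/- (Lemma 5.2: minmax value.) Let S ⊆ {1,…,n} with |S| = k. Then (i) for every p ∈ Δ_n, ℓ(p,S) ≥ 1/k; and (ii) for the strategy p* ∈ Δ_n defined by p*_i = 1/k if i ∈ S and p*_i = 0 otherwise, ℓ(p*,S) = 1/k. Consequently, the minimum of ℓ(p,S) over p ∈ Δ_n equals 1/k. -/
/-!
Against any row strategy `p`, the column player may mix uniformly over `S`: each row `i ∈ S` has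
column sum over `S` equal to `1`, and each row `i ∉ S` has `4 * |S| ≥ 1`, so the column payoffs sum
over `S` to at least `∑ i, p i = 1`, while they are all bounded by the loss. This gives
`1 ≤ k * ℓ(p, S)` (`one_div_le_gameLoss`). Conversely the uniform strategy on `S` pays `1 / k` on
columns in `S` and `0` elsewhere (`gameLoss_uniform_le`).
-/

/-- The game matrix `A_S`: Alice (the row player) gets loss `4` outside the
support `S`, loss `1` on the diagonal inside `S`, and `0` otherwise. -/
def gameA {n : ℕ} (S : Finset (Fin n)) (i j : Fin n) : ℝ :=
  if i ∈ S then (if i = j then 1 else 0) else 4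

/-- `ℓ(p,S)`: the worst-case loss of row strategy `p` in the game `A_S`,
i.e. `max_j ∑_i p i * A_S[i,j]`. -/
noncomputable def gameLoss {n : ℕ} (hn : 0 < n) (p : Fin n → ℝ) (S : Finset (Fin n)) : ℝ :=
  Finset.univ.sup' ⟨⟨0, hn⟩, Finset.mem_univ _⟩ (fun j => ∑ i, p i * gameA S i j)

/-- Every row of `A_S` sums to at least `1` over the columns in `S`, as `S` is nonempty. -/
lemma one_le_sum_gameA {n : ℕ} (S : Finset (Fin n)) (h : 1 ≤ S.card) (i : Fin n) :
    1 ≤ ∑ j ∈ S, gameA S i j := by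
  by_cases hi : i ∈ S
  · simp [gameA, hi]
  · have h' : (1 : ℝ) ≤ S.card := by exact_mod_cast h
    simp only [gameA, hi, if_false, Finset.sum_const, nsmul_eq_mul]
    linarith

lemma one_div_le_gameLoss {n : ℕ} (hn : 0 < n) (S : Finset (Fin n)) (h : 1 ≤ S.card)
    (p : Fin n → ℝ) (hp : ∀ i, 0 ≤ p i) (hp1 : ∑ i, p i = 1) :
    1 / (S.card : ℝ) ≤ gameLoss hn p S := by
  have hpos : (0 : ℝ) < S.card := by exact_mod_cast h
  rw [div_le_iff₀' hpos]
  calc (1 : ℝ) = ∑ i, p i * 1 := by simp [hp1]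
    _ ≤ ∑ i, p i * ∑ j ∈ S, gameA S i j :=
      Finset.sum_le_sum fun i _ => mul_le_mul_of_nonneg_left (one_le_sum_gameA S h i) (hp i)
    _ = ∑ j ∈ S, ∑ i, p i * gameA S i j := by
      simp only [Finset.mul_sum]
      exact Finset.sum_comm
    _ ≤ ∑ _j ∈ S, gameLoss hn p S :=
      Finset.sum_le_sum fun j _ =>
        Finset.le_sup' (fun j => ∑ i, p i * gameA S i j) (Finset.mem_univ j)
    _ = S.card * gameLoss hn p S := by simp

lemma gameLoss_uniform_le {n : ℕ} (hn : 0 < n) (S : Finset (Fin n)) :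
    gameLoss hn (fun i => if i ∈ S then (1 : ℝ) / S.card else 0) S ≤ 1 / S.card := by
  refine Finset.sup'_le _ _ fun j _ => ?_
  have hterm : ∀ i, (if i ∈ S then (1 : ℝ) / S.card else 0) * gameA S i j
      = if i = j then (if j ∈ S then (1 : ℝ) / S.card else 0) else 0 := by
    intro i
    by_cases hi : i ∈ S <;> by_cases hij : i = j <;> simp_all [gameA]
  simp only [hterm, Finset.sum_ite_eq', Finset.mem_univ, if_true]
  split_ifs
  · exact le_rfl
  · positivity

/-- **Lemma 5.2 (minmax value).** For any `S ⊆ [n]` with `|S| = k`: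
(i) every probability vector `p` has `ℓ(p,S) ≥ 1/k`; (ii) the uniform
strategy `p*` on `S` achieves `ℓ(p*,S) = 1/k`; consequently the minimum of
`ℓ(p,S)` over probability vectors `p` equals `1/k`. -/
theorem game_minmax_value (n k : ℕ) (hn : 0 < n) (hk1 : 1 ≤ k) (hkn : k ≤ n)
    (S : Finset (Fin n)) (hS : S.card = k) :
    (∀ p : Fin n → ℝ, (∀ i, 0 ≤ p i) → (∑ i, p i) = 1 → gameLoss hn p S ≥ 1 / k) ∧
    gameLoss hn (fun i => if i ∈ S then (1 : ℝ) / k else 0) S = 1 / k ∧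
    IsLeast {x : ℝ | ∃ p : Fin n → ℝ,
      (∀ i, 0 ≤ p i) ∧ (∑ i, p i) = 1 ∧ x = gameLoss hn p S} (1 / k) := by
  subst hS
  have hpos : (0 : ℝ) < S.card := by exact_mod_cast hk1
  have h0 : ∀ i, 0 ≤ (if i ∈ S then (1 : ℝ) / S.card else 0) := by
    intro i
    split_ifs <;> positivity
  have h1 : ∑ i, (if i ∈ S then (1 : ℝ) / S.card else 0) = 1 := by
    rw [Finset.sum_ite_mem, Finset.univ_inter, Finset.sum_const, nsmul_eq_mul]
    field_simp
  have hval := le_antisymm (gameLoss_uniform_le hn S) (one_div_le_gameLoss hn S hk1 _ h0 h1)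
  refine ⟨fun p hp hp1 => one_div_le_gameLoss hn S hk1 p hp hp1, hval,
    ⟨_, h0, h1, hval.symm⟩, ?_⟩
  rintro x ⟨p, hp, hp1, rfl⟩
  exact one_div_le_gameLoss hn S hk1 p hp hp1
end

section
/- (Lemma 5.2: equilibrium strategy.) Let S ⊆ {1,…,n} with |S| = k, and let p* ∈ Δ_n be defined by p*_i = 1/k if i ∈ S and p*_i = 0 otherwise. Then the pair (p*, p*) is a Nash equilibrium of the zero-sum game with loss matrix A_S for the row (minimizing) player: for every p ∈ Δ_n, ∑_{i,j} p_i·A_S[i,j]·p*_j ≥ 1/k; for every q ∈ Δ_n, ∑_{i,j} p*_i·A_S[i,j]·q_j ≤ 1/k; and ∑_{i,j} p*_i·A_S[i,j]·p*_j = 1/k. -/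
/-- **Lemma 5.2 (equilibrium strategy).** The uniform strategy `p*` on `S`
forms, paired with itself, a Nash equilibrium of the zero-sum game with loss
matrix `A_S` for the row (minimizing) player: every row deviation gives loss
at least `1/k`, every column deviation gives loss at most `1/k`, and the pair
`(p*, p*)` attains value exactly `1/k`. -/
theorem game_equilibrium (n k : ℕ) (hn : 0 < n) (hk1 : 1 ≤ k) (hkn : k ≤ n)
    (S : Finset (Fin n)) (hS : S.card = k)
    (pstar : Fin n → ℝ) (hpstar : ∀ i, pstar i = if i ∈ S then (1 : ℝ) / k else 0) :
    (∀ p : Fin n → ℝ, (∀ i, 0 ≤ p i) → (∑ i, p i) = 1 →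
      ∑ i, ∑ j, p i * gameA S i j * pstar j ≥ 1 / k) ∧
    (∀ q : Fin n → ℝ, (∀ j, 0 ≤ q j) → (∑ j, q j) = 1 →
      ∑ i, ∑ j, pstar i * gameA S i j * q j ≤ 1 / k) ∧
    ∑ i, ∑ j, pstar i * gameA S i j * pstar j = 1 / k := by
  have hk : (1 : ℝ) ≤ k := by exact_mod_cast hk1
  have hk0 : (0 : ℝ) < k := by linarith
  have hinv : (1 : ℝ) / k ≤ 1 := by rw [div_le_one hk0]; exact hk
  have hle : ∀ i, pstar i ≤ 1 / k := by
    intro i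
    rw [hpstar]
    split_ifs
    · exact le_rfl
    · positivity
  have hsum : ∑ j, pstar j = 1 := by
    simp only [hpstar, Finset.sum_ite_mem, Finset.univ_inter, Finset.sum_const, hS, nsmul_eq_mul]
    field_simp
  have hrow : ∀ i, 1 / (k : ℝ) ≤ ∑ j, gameA S i j * pstar j := by
    intro i
    by_cases hi : i ∈ S
    · simp [gameA, hi, hpstar]
    · simp only [gameA, hi, if_false, ← Finset.mul_sum, hsum]
      linarith
  have hcol : ∀ q : Fin n → ℝ,
      ∑ i, ∑ j, pstar i * gameA S i j * q j = ∑ i, pstar i * q i := by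
    intro q
    refine Finset.sum_congr rfl fun i _ => ?_
    by_cases hi : i ∈ S <;> simp [gameA, hi, hpstar]
  refine ⟨fun p hp hp1 => ?_, fun q hq hq1 => ?_, ?_⟩
  · calc ∑ i, ∑ j, p i * gameA S i j * pstar j
        = ∑ i, p i * ∑ j, gameA S i j * pstar j := by simp only [Finset.mul_sum, mul_assoc]
      _ ≥ ∑ i, p i * (1 / k) :=
          Finset.sum_le_sum fun i _ => mul_le_mul_of_nonneg_left (hrow i) (hp i)
      _ = 1 / k := by rw [← Finset.sum_mul, hp1, one_mul]
  · calc ∑ i, ∑ j, pstar i * gameA S i j * q j = ∑ i, pstar i * q i := hcol q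
      _ ≤ ∑ i, 1 / k * q i :=
          Finset.sum_le_sum fun i _ => mul_le_mul_of_nonneg_right (hle i) (hq i)
      _ = 1 / k := by rw [← Finset.mul_sum, hq1, mul_one]
  · calc ∑ i, ∑ j, pstar i * gameA S i j * pstar j = ∑ i, pstar i * pstar i := hcol pstar
      _ = ∑ i, 1 / k * pstar i := by
          refine Finset.sum_congr rfl fun i _ => ?_
          by_cases hi : i ∈ S <;> simp [hi, hpstar]
      _ = 1 / k := by rw [← Finset.mul_sum, hsum, mul_one]
end

section
/- (Maxmin bound for the game A_S.) Let S ⊆ {1,…,n} with |S| = k. Then for every q ∈ Δ_n, min_{i∈{1,…,n}} ∑_{j=1}^n A_S[i,j]·q_j ≤ 1/k. -/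
/-- **Maxmin bound for the game `A_S`.** For any `S ⊆ [n]` with `|S| = k` and
any column mixed strategy `q`, the best row response satisfies
`min_i ∑_j A_S[i,j]·q_j ≤ 1/k`. -/
theorem game_maxmin_bound (n k : ℕ) (hn : 0 < n) (hk1 : 1 ≤ k) (hkn : k ≤ n)
    (S : Finset (Fin n)) (hS : S.card = k)
    (q : Fin n → ℝ) (hq0 : ∀ j, 0 ≤ q j) (hq1 : (∑ j, q j) = 1) :
    Finset.univ.inf' ⟨⟨0, hn⟩, Finset.mem_univ _⟩
      (fun i => ∑ j, gameA S i j * q j) ≤ 1 / k := by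
  have hkpos : (0 : ℝ) < k := by exact_mod_cast hk1
  have hSne : S.Nonempty := Finset.card_pos.mp (by omega)
  -- The `k` weights `q i`, `i ∈ S`, sum to at most `1`, so one of them is at most the average `1 / k`.
  obtain ⟨i, hiS, hi⟩ : ∃ i ∈ S, q i ≤ 1 / k := by
    apply Finset.exists_le_of_sum_le hSne
    calc ∑ i ∈ S, q i ≤ ∑ i, q i :=
          Finset.sum_le_sum_of_subset_of_nonneg (Finset.subset_univ S) fun j _ _ => hq0 j
      _ = ∑ _i ∈ S, (1 / k : ℝ) := by
          rw [hq1, Finset.sum_const, hS, nsmul_eq_mul, mul_one_div_cancel (ne_of_gt hkpos)]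
  -- Row `i ∈ S` of the matrix is the `i`-th unit vector, so its payoff is `q i`.
  have hrow : ∑ j, gameA S i j * q j = q i := by simp [gameA, hiS]
  exact (Finset.inf'_le _ (Finset.mem_univ i)).trans (hrow.trans_le hi)
end

section
/- (Lemma 5.3, support-inclusion step.) Let p ∈ Δ_n and let S ⊆ {1,…,n} with |S| = k. If ℓ(p,S) < 2/k, then every index i with p_i ≥ 1/(2k) belongs to S. -/
/-- **Lemma 5.3, support-inclusion step.** If `ℓ(p,S) < 2/k`, then every
index `i` with `p i ≥ 1/(2k)` belongs to `S`. -/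
theorem game_loss_support_inclusion (n k : ℕ) (hn : 0 < n) (hk1 : 1 ≤ k) (hkn : k ≤ n)
    (p : Fin n → ℝ) (hp0 : ∀ i, 0 ≤ p i) (hp1 : (∑ i, p i) = 1)
    (S : Finset (Fin n)) (hS : S.card = k)
    (hloss : gameLoss hn p S < 2 / k) :
    ∀ i : Fin n, p i ≥ 1 / (2 * k) → i ∈ S := by
  intro i hi
  by_contra hiS
  -- Row `i` is constant, so any column would do; column `i` is a convenient one.
  have hcol : ∑ a, p a * gameA S a i ≤ gameLoss hn p S :=
    Finset.le_sup' (fun j => ∑ a, p a * gameA S a j) (Finset.mem_univ i)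
  have hnonneg : ∀ a ∈ Finset.univ, 0 ≤ p a * gameA S a i := by
    intro a _
    apply mul_nonneg (hp0 a)
    unfold gameA
    split_ifs <;> norm_num
  have hterm : p i * gameA S i i ≤ ∑ a, p a * gameA S a i :=
    Finset.single_le_sum hnonneg (Finset.mem_univ i)
  have hA : gameA S i i = 4 := by simp [gameA, hiS]
  have hk : (0 : ℝ) < k := by exact_mod_cast hk1
  have hfrac : (2 : ℝ) / k = 4 * (1 / (2 * k)) := by
    field_simp
    norm_num
  rw [hA] at hterm
  linarith
end

section
/- (Lemma 5.3, Case 2-1.) Let p ∈ Δ_n be such that p_i < 2/k for every i, and such that the set I := {i ∈ {1,…,n} : p_i ≥ 1/(2k)} has |I| < k/4. Then for every S ⊆ {1,…,n} with |S| = k, ℓ(p,S) ≥ 1/2. -/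
/-- **Lemma 5.3, Case 2-1.** Suppose every coordinate of the probability
vector `p` is below `2/k`, and the set `I = {i : p i ≥ 1/(2k)}` has fewer than
`k/4` elements. Then `ℓ(p,S) ≥ 1/2` for every `S` of size `k`. -/
theorem game_loss_case_two_one (n k : ℕ) (hn : 0 < n) (hk1 : 1 ≤ k) (hkn : k ≤ n)
    (p : Fin n → ℝ) (hp0 : ∀ i, 0 ≤ p i) (hp1 : (∑ i, p i) = 1)
    (hsmall : ∀ i, p i < 2 / k)
    (I : Finset (Fin n)) (hI : ∀ i, i ∈ I ↔ p i ≥ 1 / (2 * k))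
    (hIcard : (I.card : ℝ) < k / 4) :
    ∀ S : Finset (Fin n), S.card = k → gameLoss hn p S ≥ 1 / 2 := by
  intro S hS
  have hk : (0 : ℝ) < k := by exact_mod_cast hk1
  have hpt : ∀ i, p i ≤ 1 / (2 * k) + if i ∈ I then 3 / (2 * (k : ℝ)) else 0 := by
    intro i
    split_ifs with h
    · have e : 1 / (2 * (k : ℝ)) + 3 / (2 * k) = 2 / k := by
        field_simp
        norm_num
      rw [e]
      exact (hsmall i).le
    · have := mt (hI i).2 h
      linarith
  have hmass : ∑ i ∈ S, p i ≤ 7 / 8 := by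
    calc ∑ i ∈ S, p i
        ≤ ∑ i ∈ S, (1 / (2 * k) + if i ∈ I then 3 / (2 * (k : ℝ)) else 0) :=
          Finset.sum_le_sum fun i _ => hpt i
      _ = 1 / 2 + (S ∩ I).card * (3 / (2 * (k : ℝ))) := by
          rw [Finset.sum_add_distrib, Finset.sum_ite_mem, Finset.sum_const, Finset.sum_const, hS,
            nsmul_eq_mul, nsmul_eq_mul]
          congr 1
          field_simp
      _ ≤ 1 / 2 + (k / 4) * (3 / (2 * (k : ℝ))) := by
          have hc : ((S ∩ I).card : ℝ) ≤ I.card := by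
            exact_mod_cast Finset.card_le_card Finset.inter_subset_right
          gcongr
          exact hc.trans hIcard.le
      _ = 7 / 8 := by
          field_simp
          norm_num
  have hout : 1 / 8 ≤ ∑ i ∈ Sᶜ, p i := by
    have := Finset.sum_add_sum_compl S p
    linarith
  -- Any column works, since all columns agree on the rows outside `S`.
  refine le_trans ?_ (Finset.le_sup' (fun j => ∑ i, p i * gameA S i j)
    (Finset.mem_univ (⟨0, hn⟩ : Fin n)))
  have hin : 0 ≤ ∑ i ∈ S, p i * gameA S i ⟨0, hn⟩ := by
    refine Finset.sum_nonneg fun i _ => mul_nonneg (hp0 i) ?_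
    unfold gameA
    split_ifs <;> norm_num
  have hcompl : ∑ i ∈ Sᶜ, p i * gameA S i ⟨0, hn⟩ = (∑ i ∈ Sᶜ, p i) * 4 := by
    rw [Finset.sum_mul]
    refine Finset.sum_congr rfl fun i hi => ?_
    simp [gameA, Finset.mem_compl.1 hi]
  have hsplit := Finset.sum_add_sum_compl S (fun i => p i * gameA S i ⟨0, hn⟩)
  change 1 / 2 ≤ ∑ i, p i * gameA S i ⟨0, hn⟩
  linarith
end

section
/- (Structural characterization of low-loss games.) Assume k ≥ 4. Let p ∈ Δ_n and let S ⊆ {1,…,n} with |S| = k satisfy ℓ(p,S) < 2/k. Then the set I := {i ∈ {1,…,n} : p_i ≥ 1/(2k)} satisfies I ⊆ S and |I| ≥ k/4. -/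
/-- **Structural characterization of low-loss games.** Assume `k ≥ 4`. If the
probability vector `p` and the size-`k` set `S` satisfy `ℓ(p,S) < 2/k`, then
the set `I = {i : p i ≥ 1/(2k)}` satisfies `I ⊆ S` and `|I| ≥ k/4`. -/
theorem game_loss_structure (n k : ℕ) (hn : 0 < n) (hk4 : 4 ≤ k) (hkn : k ≤ n)
    (p : Fin n → ℝ) (hp0 : ∀ i, 0 ≤ p i) (hp1 : (∑ i, p i) = 1)
    (S : Finset (Fin n)) (hS : S.card = k)
    (hloss : gameLoss hn p S < 2 / k)
    (I : Finset (Fin n)) (hI : ∀ i, i ∈ I ↔ p i ≥ 1 / (2 * k)) :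
    I ⊆ S ∧ (I.card : ℝ) ≥ (k : ℝ) / 4 := by
  have hkR : (4 : ℝ) ≤ k := by exact_mod_cast hk4
  have hk0 : (0 : ℝ) < k := by linarith
  set q : ℝ := ∑ i ∈ Sᶜ, p i with hq
  have hq0 : 0 ≤ q := Finset.sum_nonneg fun i _ => hp0 i
  have hsplit : ∑ i ∈ S, p i + q = 1 := by rw [hq, Finset.sum_add_sum_compl, hp1]
  have hcol : ∀ j, (if j ∈ S then p j else 0) + 4 * q < 2 / k := by
    intro j
    have hj : ∑ i, p i * gameA S i j < 2 / k :=
      lt_of_le_of_lt (Finset.le_sup' (fun j => ∑ i, p i * gameA S i j) (Finset.mem_univ j)) hloss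
    rw [← Finset.sum_add_sum_compl S] at hj
    have h1 : ∑ i ∈ S, p i * gameA S i j = if j ∈ S then p j else 0 := by
      rw [← Finset.sum_ite_eq' S j p]
      refine Finset.sum_congr rfl fun i hi => ?_
      simp [gameA, hi]
    have h2 : ∑ i ∈ Sᶜ, p i * gameA S i j = 4 * q := by
      rw [hq, Finset.mul_sum]
      refine Finset.sum_congr rfl fun i hi => ?_
      rw [gameA, if_neg (Finset.mem_compl.mp hi), mul_comm]
    rwa [h1, h2] at hj
  have hhalf : (2 : ℝ) / k = 4 * (1 / (2 * k)) := by field_simp; norm_num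
  have hqlt : q < 1 / (2 * k) := by
    have h := hcol ⟨0, hn⟩
    have h0 : 0 ≤ if (⟨0, hn⟩ : Fin n) ∈ S then p ⟨0, hn⟩ else 0 := by
      split_ifs
      · exact hp0 _
      · exact le_rfl
    linarith
  have hIS : I ⊆ S := by
    intro i hi
    by_contra hiS
    have h1 : p i ≤ q :=
      Finset.single_le_sum (fun i _ => hp0 i) (Finset.mem_compl.mpr hiS)
    have h2 := (hI i).mp hi
    linarith
  refine ⟨hIS, ?_⟩
  have hA : ∑ i ∈ I, p i ≤ I.card * (2 / k) := by
    rw [← nsmul_eq_mul]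
    refine Finset.sum_le_card_nsmul _ _ _ fun i hi => ?_
    have h := hcol i
    rw [if_pos (hIS hi)] at h
    linarith
  have hB : ∑ i ∈ S \ I, p i ≤ ((k : ℝ) - I.card) * (1 / (2 * k)) := by
    have hc : ((S \ I).card : ℝ) = k - I.card := by
      rw [Finset.cast_card_sdiff hIS, hS]
    rw [← hc, ← nsmul_eq_mul]
    refine Finset.sum_le_card_nsmul _ _ _ fun i hi => ?_
    have h := mt (hI i).mpr (Finset.mem_sdiff.mp hi).2
    exact (not_le.mp h).le
  have hsum := Finset.sum_sdiff (f := p) hIS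
  -- Put `t = 1/(2k)`: the bounds combine to `1 - t ≤ 3 |I| t + k t` with `k t = 1/2`.
  set t : ℝ := 1 / (2 * k) with ht
  have hkt : (k : ℝ) * t = 1 / 2 := by rw [ht]; field_simp
  have ht0 : 0 < t := by positivity
  have ht8 : 4 * t ≤ 1 / 2 := by rw [← hkt]; gcongr
  rw [hhalf] at hA
  have hfin : 3 * (k / 4 * t) ≤ 3 * (I.card * t) := by linarith
  exact le_of_mul_le_mul_right (by linarith) ht0
end

section
/- (Lemma 5.3: covering bound for a single strategy.) Assume k ≥ 4, k is divisible by 4, and n ≥ 3k/2. Then for every fixed p ∈ Δ_n, the number of subsets S ⊆ {1,…,n} with |S| = k and ℓ(p,S) < 2/k is at most the binomial coefficient C(n, 3k/4). -/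
/-- Each column sum splits into the mass outside `S` and the diagonal entry. -/
lemma column_lt {n : ℕ} {hn : 0 < n} {p : Fin n → ℝ} {S : Finset (Fin n)} {c : ℝ}
    (h : gameLoss hn p S < c) (j : Fin n) :
    4 * ∑ i ∈ Sᶜ, p i + (if j ∈ S then p j else 0) < c := by
  have hj := (Finset.sup'_lt_iff _).1 h j (Finset.mem_univ j)
  rw [← Finset.sum_add_sum_compl S] at hj
  have h1 : ∑ i ∈ S, p i * gameA S i j = if j ∈ S then p j else 0 := by
    rw [← Finset.sum_ite_eq' S j p]
    exact Finset.sum_congr rfl fun i hi => by simp [gameA, hi]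
  have h2 : ∑ i ∈ Sᶜ, p i * gameA S i j = 4 * ∑ i ∈ Sᶜ, p i := by
    rw [Finset.mul_sum]
    refine Finset.sum_congr rfl fun i hi => ?_
    have hi : i ∉ S := Finset.mem_compl.1 hi
    simp [gameA, hi, mul_comm]
  linarith

lemma mass_compl_lt {n k : ℕ} {hn : 0 < n} (hk : 0 < k) {p : Fin n → ℝ} (hp0 : ∀ i, 0 ≤ p i)
    {S : Finset (Fin n)} (h : gameLoss hn p S < 2 / k) :
    ∑ i ∈ Sᶜ, p i < 1 / (2 * k) := by
  have h1 := column_lt h ⟨0, hn⟩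
  have h2 : 0 ≤ if (⟨0, hn⟩ : Fin n) ∈ S then p ⟨0, hn⟩ else 0 := by
    split_ifs
    exacts [hp0 _, le_rfl]
  have h3 : (1 : ℝ) / (2 * k) = (2 / k) / 4 := by
    have : (k : ℝ) ≠ 0 := by positivity
    field_simp
    norm_num
  linarith

lemma heavy_subset {n k : ℕ} {hn : 0 < n} (hk : 0 < k) {p : Fin n → ℝ} (hp0 : ∀ i, 0 ≤ p i)
    {S : Finset (Fin n)} (h : gameLoss hn p S < 2 / k) :
    Finset.univ.filter (fun i => 1 / (2 * (k : ℝ)) ≤ p i) ⊆ S := by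
  intro i hi
  by_contra hS
  have h1 := Finset.single_le_sum (fun j _ => hp0 j) (Finset.mem_compl.2 hS)
  have h2 := mass_compl_lt hk hp0 h
  have h3 := (Finset.mem_filter.1 hi).2
  linarith

/-- With `t` heavy indices, `S` has mass at most `k/(2k) + 3t/(2k)`, which must exceed
`1 - 1/(2k)`; thus `3t > k - 1`. -/
lemma heavy_card {n k : ℕ} {hn : 0 < n} (hk : 4 ≤ k) {p : Fin n → ℝ} (hp0 : ∀ i, 0 ≤ p i)
    (hp1 : ∑ i, p i = 1) {S : Finset (Fin n)} (hS : S.card = k)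
    (h : gameLoss hn p S < 2 / k) :
    k / 4 ≤ (Finset.univ.filter (fun i => 1 / (2 * (k : ℝ)) ≤ p i)).card := by
  have hsub := heavy_subset (by omega) hp0 h
  have hq := mass_compl_lt (by omega) hp0 h
  set T := Finset.univ.filter (fun i => 1 / (2 * (k : ℝ)) ≤ p i) with hT
  have hk0 : (0 : ℝ) < k := by
    have : 0 < k := by omega
    exact_mod_cast this
  have hq0 : 0 ≤ ∑ i ∈ Sᶜ, p i := Finset.sum_nonneg fun i _ => hp0 i
  have hsum := Finset.sum_add_sum_compl S p
  have hbound : ∑ i ∈ S, p i ≤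
      ∑ i ∈ S, (1 / (2 * (k : ℝ)) + if i ∈ T then 3 / (2 * (k : ℝ)) else 0) := by
    refine Finset.sum_le_sum fun i hi => ?_
    split_ifs with hiT
    · have h1 := column_lt h i
      rw [if_pos hi] at h1
      have h2 : 1 / (2 * (k : ℝ)) + 3 / (2 * (k : ℝ)) = 2 / k := by
        field_simp
        norm_num
      linarith
    · have : ¬ 1 / (2 * (k : ℝ)) ≤ p i := fun hh => hiT (by simp [hT] at hh ⊢; exact hh)
      linarith
  rw [Finset.sum_add_distrib, Finset.sum_const, ← Finset.sum_filter, Finset.sum_const,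
    Finset.filter_mem_eq_inter, Finset.inter_eq_right.2 hsub, hS, nsmul_eq_mul,
    nsmul_eq_mul] at hbound
  have hlt : (1 : ℝ) < (k + 3 * T.card + 1) / (2 * k) := by
    have h3 : ((k : ℝ) + 3 * T.card + 1) / (2 * k)
        = k * (1 / (2 * k)) + T.card * (3 / (2 * k)) + 1 / (2 * k) := by ring
    linarith
  rw [lt_div_iff₀ (by positivity)] at hlt
  have hnat : 2 * k < k + 3 * T.card + 1 := by
    have : (2 : ℝ) * k < k + 3 * T.card + 1 := by linarith
    exact_mod_cast this
  omega

/-- **Lemma 5.3 (covering bound for a single strategy).** Assume `k ≥ 4`, `4 ∣ k`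
and `n ≥ 3k/2`. For every fixed probability vector `p`, the number of size-`k`
subsets `S ⊆ [n]` with `ℓ(p,S) < 2/k` is at most `C(n, 3k/4)`. -/
theorem game_loss_covering (n k : ℕ) (hn : 0 < n) (hk4 : 4 ≤ k) (hkdvd : 4 ∣ k)
    (hkn : k ≤ n) (h32 : 3 * k ≤ 2 * n)
    (p : Fin n → ℝ) (hp0 : ∀ i, 0 ≤ p i) (hp1 : (∑ i, p i) = 1) :
    {S : Finset (Fin n) | S.card = k ∧ gameLoss hn p S < 2 / k}.ncard ≤
      n.choose (3 * k / 4) := by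
  rcases Set.eq_empty_or_nonempty
    {S : Finset (Fin n) | S.card = k ∧ gameLoss hn p S < 2 / k} with he | ⟨S₀, hS₀, hl₀⟩
  · simp [he]
  obtain ⟨U, hUT, hU⟩ := Finset.exists_subset_card_eq (heavy_card hk4 hp0 hp1 hS₀ hl₀)
  have hUS : ∀ S : Finset (Fin n), gameLoss hn p S < 2 / k → U ⊆ S := fun S hS =>
    hUT.trans (heavy_subset (by omega) hp0 hS)
  have hcard : ((Finset.univ : Finset (Fin n)).powersetCard (3 * k / 4)).card
      = n.choose (3 * k / 4) := by simp
  rw [← hcard, ← Set.ncard_coe_finset]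
  refine Set.ncard_le_ncard_of_injOn (fun S => S \ U) ?_ ?_ (Finset.finite_toSet _)
  · rintro S ⟨hS, hl⟩
    simp only [Finset.mem_coe, Finset.mem_powersetCard, Finset.subset_univ, true_and]
    rw [Finset.card_sdiff_of_subset (hUS S hl)]
    omega
  · rintro S ⟨_, hl⟩ S' ⟨_, hl'⟩ heq
    rw [← Finset.sdiff_union_of_subset (hUS S hl), ← Finset.sdiff_union_of_subset (hUS S' hl')]
    exact congrArg (· ∪ U) heq
end

section
/- (Deterministic core of the lower-bound counting argument, Theorem 5.1.) Assume k ≥ 4, k is divisible by 4, and n ≥ 3k/2. Let P be a finite set of probability vectors in Δ_n. Then the number of subsets S ⊆ {1,…,n} with |S| = k for which there exists some p ∈ P with ℓ(p,S) < 2/k is at most |P| · C(n, 3k/4). -/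
lemma choose_le_choose_of_le_half (n a b : ℕ) (hab : a ≤ b) (hb : 2 * b ≤ n) :
    n.choose a ≤ n.choose b := by
  induction b, hab using Nat.le_induction with
  | base => exact le_rfl
  | succ m _ ih =>
    exact (ih (by omega)).trans (Nat.choose_le_succ_of_lt_half_left (by omega))

lemma sum_mul_gameA {n : ℕ} (p : Fin n → ℝ) (S : Finset (Fin n)) (j : Fin n) :
    ∑ i, p i * gameA S i j = 4 * ∑ i ∈ Sᶜ, p i + if j ∈ S then p j else 0 := by
  rw [← Finset.sum_compl_add_sum S, Finset.mul_sum]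
  congr 1
  · refine Finset.sum_congr rfl fun i hi => ?_
    rw [gameA, if_neg (Finset.mem_compl.mp hi), mul_comm]
  · rw [← Finset.sum_ite_eq' S j p]
    refine Finset.sum_congr rfl fun i hi => ?_
    rw [gameA, if_pos hi]
    split_ifs <;> simp

/-- The coordinates carrying mass at least `1/(2k)`. -/
noncomputable def heavy {n : ℕ} (k : ℕ) (p : Fin n → ℝ) : Finset (Fin n) :=
  Finset.univ.filter fun i => 1 / (2 * (k : ℝ)) ≤ p i

/-- A strategy with loss below `2/k` on `S` reveals at least a quarter of `S` through its heavy
coordinates. -/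
lemma heavy_subset_and_card {n k : ℕ} (hn : 0 < n) (hk : 4 ≤ k) (p : Fin n → ℝ)
    (hp : ∀ i, 0 ≤ p i) (hsum : ∑ i, p i = 1) (S : Finset (Fin n)) (hS : S.card = k)
    (hl : gameLoss hn p S < 2 / k) :
    heavy k p ⊆ S ∧ k ≤ 4 * (heavy k p).card := by
  have hk0 : (0 : ℝ) < k := by exact_mod_cast (by omega : 0 < k)
  replace hl := (Finset.sup'_lt_iff _).mp hl
  simp only [sum_mul_gameA] at hl
  have hcompl0 : 0 ≤ ∑ i ∈ Sᶜ, p i := Finset.sum_nonneg fun i _ => hp i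
  have hmem : ∀ j ∈ S, p j < 2 / k := fun j hj => by
    have := hl j (Finset.mem_univ j)
    rw [if_pos hj] at this
    linarith
  have hquarter : 2 / (k : ℝ) = 4 * (1 / (2 * k)) := by field_simp; norm_num
  have hcompl : ∑ i ∈ Sᶜ, p i < 1 / (2 * k) := by
    have h0 := hl ⟨0, hn⟩ (Finset.mem_univ _)
    have : (0 : ℝ) ≤ if (⟨0, hn⟩ : Fin n) ∈ S then p ⟨0, hn⟩ else 0 := by
      split_ifs
      · exact hp _
      · exact le_rfl
    linarith
  have hsub : heavy k p ⊆ S := by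
    intro i hi
    by_contra hiS
    have h1 : 1 / (2 * (k : ℝ)) ≤ p i := (Finset.mem_filter.mp hi).2
    have h2 : p i ≤ ∑ i ∈ Sᶜ, p i :=
      Finset.single_le_sum (fun i _ => hp i) (Finset.mem_compl.mpr hiS)
    linarith
  refine ⟨hsub, ?_⟩
  have hB : ∑ i ∈ heavy k p, p i ≤ (heavy k p).card * (2 / (k : ℝ)) := by
    rw [← nsmul_eq_mul]
    exact Finset.sum_le_card_nsmul _ _ _ fun i hi => (hmem i (hsub hi)).le
  have hL : ∑ i ∈ S \ heavy k p, p i ≤ (S \ heavy k p).card * (1 / (2 * (k : ℝ))) := by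
    rw [← nsmul_eq_mul]
    refine Finset.sum_le_card_nsmul _ _ _ fun i hi => ?_
    by_contra hlt
    exact (Finset.mem_sdiff.mp hi).2 (Finset.mem_filter.mpr ⟨Finset.mem_univ i, by linarith⟩)
  have hcard : ((S \ heavy k p).card : ℝ) = k - (heavy k p).card := by
    rw [Finset.cast_card_sdiff hsub, hS]
  have hsplit := Finset.sum_sdiff (f := p) hsub
  have htot := Finset.sum_compl_add_sum S p
  rw [hcard] at hL
  rw [hquarter] at hB
  set b := (heavy k p).card
  set t : ℝ := 1 / (2 * (k : ℝ)) with ht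
  have htk : 2 * (k : ℝ) * t = 1 := by rw [ht]; field_simp
  have ht0 : 0 < t := by positivity
  have hkey : (0 : ℝ) < (3 * b + 1 - k) * t := by linarith
  have hpos : (0 : ℝ) < 3 * b + 1 - k := pos_of_mul_pos_left hkey ht0.le
  have : k < 3 * b + 1 := by
    have : (k : ℝ) < 3 * b + 1 := by linarith
    exact_mod_cast this
  omega

lemma card_filter_gameLoss_le {n k : ℕ} (hn : 0 < n) (hk : 4 ≤ k) (hkdvd : 4 ∣ k)
    (h32 : 3 * k ≤ 2 * n) (p : Fin n → ℝ) (hp : ∀ i, 0 ≤ p i) (hsum : ∑ i, p i = 1)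
    (F : Finset (Finset (Fin n)))
    (hF : ∀ S ∈ F, S.card = k ∧ gameLoss hn p S < 2 / k) :
    F.card ≤ n.choose (3 * k / 4) := by
  rcases F.eq_empty_or_nonempty with rfl | ⟨S₀, hS₀⟩
  · simp
  have key : ∀ S ∈ F, heavy k p ⊆ S ∧ k ≤ 4 * (heavy k p).card := fun S hS =>
    heavy_subset_and_card hn hk p hp hsum S (hF S hS).1 (hF S hS).2
  have hb := (key S₀ hS₀).2
  have hle : F.card ≤
      ((Finset.univ : Finset (Fin n)).powersetCard (k - (heavy k p).card)).card := by
    refine Finset.card_le_card_of_injOn (fun S => S \ heavy k p) ?_ ?_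
    · intro S hS
      refine Finset.mem_powersetCard.mpr ⟨Finset.subset_univ _, ?_⟩
      rw [Finset.card_sdiff_of_subset (key S hS).1, (hF S hS).1]
    · intro S hS T hT hST
      rw [← Finset.sdiff_union_of_subset (key S hS).1,
        ← Finset.sdiff_union_of_subset (key T hT).1]
      exact congrArg (· ∪ heavy k p) hST
  rw [Finset.card_powersetCard, Finset.card_univ, Fintype.card_fin] at hle
  exact hle.trans (choose_le_choose_of_le_half _ _ _ (by omega) (by omega))

/-- **Deterministic core of the lower-bound counting argument (Theorem 5.1).**
Assume `k ≥ 4`, `4 ∣ k` and `n ≥ 3k/2`. For any finite set `P` of probability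
vectors, the number of size-`k` subsets `S ⊆ [n]` for which some `p ∈ P` has
`ℓ(p,S) < 2/k` is at most `|P| · C(n, 3k/4)`. -/
theorem game_loss_union_covering (n k : ℕ) (hn : 0 < n) (hk4 : 4 ≤ k) (hkdvd : 4 ∣ k)
    (hkn : k ≤ n) (h32 : 3 * k ≤ 2 * n)
    (P : Finset (Fin n → ℝ))
    (hP : ∀ p ∈ P, (∀ i, 0 ≤ p i) ∧ (∑ i, p i) = 1) :
    {S : Finset (Fin n) | S.card = k ∧ ∃ p ∈ P, gameLoss hn p S < 2 / k}.ncard ≤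
      P.card * n.choose (3 * k / 4) := by
  classical
  have hset : {S : Finset (Fin n) | S.card = k ∧ ∃ p ∈ P, gameLoss hn p S < 2 / k} =
      ↑(P.biUnion fun p => Finset.univ.filter fun S : Finset (Fin n) =>
        S.card = k ∧ gameLoss hn p S < 2 / k) := by
    ext S
    simp only [Set.mem_ofPred_eq, Finset.coe_biUnion, Set.mem_iUnion, Finset.mem_coe,
      Finset.mem_filter, Finset.mem_univ, true_and, exists_prop]
    tauto
  rw [hset, Set.ncard_coe_finset]
  refine Finset.card_biUnion_le_card_mul _ _ _ fun p hp => ?_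
  exact card_filter_gameLoss_le hn hk4 hkdvd h32 p (hP p hp).1 (hP p hp).2 _
    fun S hS => (Finset.mem_filter.mp hS).2
end
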